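/- Let X be a long space (a Hausdorff space in which every σ-compact subset has compact closure) and let E be a Banach space over ℝ or ℂ. Then the vector space C_cpt(X, E) of continuous compactly supported maps X → E, equipped with the supremum norm ‖f‖ = sup_{x ∈ X} ‖f(x)‖, is a Banach space; in particular it is complete. -/

import Mathlib

open TopologicalSpace BoundedContinuousFunction

variable (X : Type*) [TopologicalSpace X] [T2Space X]
variable (𝕜 : Type*) [RCLike 𝕜]
variable (E : Type*) [NormedAddCommGroup E] [NormedSpace 𝕜 E] [CompleteSpace E]

/-- The space `C_cpt(X, E)` of continuous compactly supported `E`-valued maps on `X`, realized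
as the submodule of the bounded continuous functions `X →ᵇ E` (so that it carries the
supremum norm) consisting of the compactly supported ones. -/
def CcptSubmodule : Submodule 𝕜 (BoundedContinuousFunction X E) where
  carrier := {f | IsCompact (closure {x | f x ≠ 0})}
  zero_mem' := by
    show IsCompact (closure {x : X | (0 : BoundedContinuousFunction X E) x ≠ 0})
    have : {x : X | (0 : BoundedContinuousFunction X E) x ≠ 0} = ∅ := by ext x; simp
    rw [this, closure_empty]
    exact isCompact_empty
  add_mem' := by
    intro f g hf hg
    refine (hf.union hg).of_isClosed_subset isClosed_closure ?_
    rw [← closure_union]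
    refine closure_mono fun x hx => ?_
    by_contra hc
    simp only [Set.mem_union, Set.mem_setOf_eq, not_or, not_not] at hc
    exact hx (by simp [hc.1, hc.2])
  smul_mem' := by
    intro c f hf
    refine hf.of_isClosed_subset isClosed_closure ?_
    refine closure_mono fun x hx => ?_
    simp only [Set.mem_setOf_eq, coe_smul, Pi.smul_apply] at hx ⊢
    intro h
    exact hx (by rw [h, smul_zero])

section

variable {X β ι : Type*} [Zero β]

theorem support_subset_iUnion_support_of_tendsto [TopologicalSpace β] [T1Space β] {l : Filter ι}
    [l.NeBot] {F : ι → X → β} {f : X → β} (hf : Filter.Tendsto F l (nhds f)) :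
    Function.support f ⊆ ⋃ i, Function.support (F i) := by
  intro x hfx
  by_contra hx
  have hFx : ∀ i, F i x = 0 := by simpa using hx
  have hlim : Filter.Tendsto (fun i ↦ F i x) l (nhds (f x)) := hf.apply_nhds x
  simp only [hFx, tendsto_const_nhds_iff] at hlim
  exact hfx hlim.symm

variable [TopologicalSpace X]

theorem hasCompactSupport_of_tendsto [TopologicalSpace β] [T1Space β] [Countable ι]
    (hlong : ∀ A : Set X, IsSigmaCompact A → IsCompact (closure A)) {l : Filter ι} [l.NeBot]
    {F : ι → X → β} {f : X → β} (hF : ∀ i, HasCompactSupport (F i))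
    (hf : Filter.Tendsto F l (nhds f)) : HasCompactSupport f := by
  have hcompact : IsCompact (closure (⋃ i, tsupport (F i))) :=
    hlong _ (isSigmaCompact_iUnion_of_isCompact _ hF)
  have hsub : Function.support f ⊆ ⋃ i, tsupport (F i) :=
    (support_subset_iUnion_support_of_tendsto hf).trans
      (Set.iUnion_mono fun i ↦ subset_tsupport (F i))
  exact hcompact.of_isClosed_subset (isClosed_tsupport f) (closure_mono hsub)

theorem isClosed_setOf_hasCompactSupport [MetricSpace β]
    (hlong : ∀ A : Set X, IsSigmaCompact A → IsCompact (closure A)) :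
    IsClosed {f : X →ᵇ β | HasCompactSupport f} := by
  refine IsSeqClosed.isClosed fun F f hF hlim ↦ ?_
  have hpointwise : Filter.Tendsto (fun n ↦ ⇑(F n)) Filter.atTop (nhds ⇑f) :=
    continuous_coe.continuousAt.tendsto.comp hlim
  exact hasCompactSupport_of_tendsto hlong hF hpointwise

end

theorem exists_boundedContinuousFunction_coe_eq {X E : Type*} [TopologicalSpace X]
    [SeminormedAddCommGroup E] {g : X → E} (hg : Continuous g) (hsupp : HasCompactSupport g) :
    ∃ f : X →ᵇ E, ⇑f = g := by
  obtain ⟨C, hC⟩ := hsupp.exists_bound_of_continuous hg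
  exact ⟨.ofNormedAddCommGroup g hg C hC, rfl⟩

section

variable {X 𝕜 E : Type*} [TopologicalSpace X] [RCLike 𝕜] [NormedAddCommGroup E] [NormedSpace 𝕜 E]

theorem mem_ccptSubmodule {f : X →ᵇ E} : f ∈ CcptSubmodule X 𝕜 E ↔ HasCompactSupport f :=
  Iff.rfl

theorem completeSpace_ccptSubmodule [CompleteSpace E]
    (hlong : ∀ A : Set X, IsSigmaCompact A → IsCompact (closure A)) :
    CompleteSpace (CcptSubmodule X 𝕜 E) :=
  (isClosed_setOf_hasCompactSupport hlong).completeSpace_coe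

theorem exists_ccptSubmodule_coe_eq {g : X → E} (hg : Continuous g) (hsupp : HasCompactSupport g) :
    ∃ f : CcptSubmodule X 𝕜 E, ⇑(f : X →ᵇ E) = g := by
  obtain ⟨f, rfl⟩ := exists_boundedContinuousFunction_coe_eq hg hsupp
  exact ⟨⟨f, mem_ccptSubmodule.2 hsupp⟩, rfl⟩

end

theorem ccpt_banach_of_long_general (X : Type*) [TopologicalSpace X] (𝕜 : Type*) [RCLike 𝕜]
    (E : Type*) [NormedAddCommGroup E] [NormedSpace 𝕜 E] [CompleteSpace E]
    (hlong : ∀ A : Set X, IsSigmaCompact A → IsCompact (closure A)) :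
    CompleteSpace (CcptSubmodule X 𝕜 E) ∧
      (∀ f : CcptSubmodule X 𝕜 E, ‖f‖ = ⨆ x : X, ‖(f : X →ᵇ E) x‖) ∧
      (∀ g : X → E, Continuous g → HasCompactSupport g →
        ∃ f : CcptSubmodule X 𝕜 E, ⇑(f : X →ᵇ E) = g) :=
  ⟨completeSpace_ccptSubmodule hlong, fun f ↦ norm_eq_iSup_norm (f : X →ᵇ E),
    fun _ ↦ exists_ccptSubmodule_coe_eq⟩

/-- Let `X` be a long space (every σ-compact subset has compact closure) and
`E` a Banach space over `ℝ` or `ℂ`. Then `C_cpt(X, E)`, the space of continuous compactly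
supported maps `X → E` with the supremum norm, is a Banach space: it is a complete normed
space, its norm is `‖f‖ = sup_x ‖f x‖`, and every continuous compactly supported map `X → E`
belongs to it. -/
theorem ccpt_banach_of_long
    (hlong : ∀ A : Set X,
      (∃ K : ℕ → Set X, (∀ n, IsCompact (K n)) ∧ A = ⋃ n, K n) → IsCompact (closure A)) :
    CompleteSpace (CcptSubmodule X 𝕜 E) ∧
      (∀ f : CcptSubmodule X 𝕜 E,
        ‖f‖ = ⨆ x : X, ‖(f : BoundedContinuousFunction X E) x‖) ∧
      (∀ g : X → E, Continuous g → IsCompact (closure {x | g x ≠ 0}) →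
        ∃ f : CcptSubmodule X 𝕜 E, ⇑(f : BoundedContinuousFunction X E) = g) :=
  ccpt_banach_of_long_general X 𝕜 E fun A ⟨K, hK, hKA⟩ ↦ hlong A ⟨K, hK, hKA.symm⟩
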